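/- (Copying and deleting of acyclic diagrams) For any acyclic diagram d : ▶^m → ▶^n in Syn_M, the following equalities are derivable in PGA: (d ⊗ d) ; merge_n =_PGA merge_m ; d, and start_m ; d =_PGA start_n, where merge_k : ▶^{2k} → ▶^k and start_k : ε → ▶^k denote the k-wire generalisations of merge and start built from merge, start, identities and wire crossings. -/

import Mathlib

set_option autoImplicit true

namespace PaperPG

/-! ## The diagrammatic syntax `Syn_M` and the equational theory PGA -/

/-- The two generating objects (wire colours): `r` = ▶ and `l` = ◀. -/
inductive Obj : Type
  | r : Obj
  | l : Obj
  deriving DecidableEq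

/-- Objects of the free prop: words over `{▶, ◀}`. -/
abbrev Word := List Obj

/-- The word `▶^m`. -/
def rword (m : ℕ) : Word := List.replicate m Obj.r

/-- Morphisms of the free two-coloured prop `Syn_M`: formal (sequential and parallel)
composites of identities, symmetries and the generators of the calculus of parity
games, with priorities bounded by `M`. -/
inductive Syn (M : ℕ) : Word → Word → Type where
  | id : (v : Word) → Syn M v v
  | comp : {u v w : Word} → Syn M u v → Syn M v w → Syn M u w
  | tensor : {u1 w1 u2 w2 : Word} → Syn M u1 w1 → Syn M u2 w2 → Syn M (u1 ++ u2) (w1 ++ w2)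
  | symm : (v w : Word) → Syn M (v ++ w) (w ++ v)
  | player0 : Syn M [Obj.r] [Obj.r, Obj.r]
  | lose0 : Syn M [Obj.r] []
  | player1 : Syn M [Obj.r] [Obj.r, Obj.r]
  | lose1 : Syn M [Obj.r] []
  | merge : Syn M [Obj.r, Obj.r] [Obj.r]
  | start : Syn M [] [Obj.r]
  | priority : Fin (M + 1) → Syn M [Obj.r] [Obj.r]
  | cup : Syn M [] [Obj.r, Obj.l]
  | cap : Syn M [Obj.l, Obj.r] []

infixl:60 " ⨟ " => Syn.comp
infixl:65 " ⊠ " => Syn.tensor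

/-- Transport a diagram along equalities of words. -/
def Syn.castHom {M : ℕ} {u u' w w' : Word} (hu : u = u') (hw : w = w')
    (f : Syn M u w) : Syn M u' w' := by
  subst hu; subst hw; exact f

/-- The inner body of the parity axiom: `merge ⨟ player0` followed by
`(player1 ⨟ (id ⊠ priority p)) ⊠ id`. -/
def parityBody (M : ℕ) (p : Fin (M + 1)) : Syn M [Obj.r, Obj.r] [Obj.r, Obj.r, Obj.r] :=
  Syn.merge ⨟ Syn.player0
    ⨟ ((Syn.player1 ⨟ (Syn.id [Obj.r] ⊠ Syn.priority p) : Syn M [Obj.r] [Obj.r, Obj.r])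
        ⊠ Syn.id [Obj.r])

/-- The left-hand side of the parity axiom (E): the feedback loop formed, via `cup`
and `cap`, by feeding the `priority p` output of `parityBody` back to its second
input. -/
def parityLHS (M : ℕ) (p : Fin (M + 1)) : Syn M [Obj.r] [Obj.r, Obj.r] :=
  (Syn.id [Obj.r] ⊠ Syn.cup : Syn M [Obj.r] [Obj.r, Obj.r, Obj.l])
  ⨟ (parityBody M p ⊠ Syn.id [Obj.l] : Syn M [Obj.r, Obj.r, Obj.l] [Obj.r, Obj.r, Obj.r, Obj.l])
  ⨟ ((Syn.id [Obj.r] ⊠ Syn.id [Obj.r]) ⊠ Syn.symm [Obj.r] [Obj.l] :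
      Syn M [Obj.r, Obj.r, Obj.r, Obj.l] [Obj.r, Obj.r, Obj.l, Obj.r])
  ⨟ ((Syn.id [Obj.r] ⊠ Syn.symm [Obj.r] [Obj.l]) ⊠ Syn.id [Obj.r] :
      Syn M [Obj.r, Obj.r, Obj.l, Obj.r] [Obj.r, Obj.l, Obj.r, Obj.r])
  ⨟ ((Syn.id [Obj.r] ⊠ Syn.cap) ⊠ Syn.id [Obj.r] :
      Syn M [Obj.r, Obj.l, Obj.r, Obj.r] [Obj.r, Obj.r])

/-- The smallest congruence (with respect to sequential and parallel composition) on
the morphisms of `Syn_M` containing the laws of symmetric monoidal categories and the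
axioms of Parity Game Algebra (PGA): (A) compact closure and loop removal,
(B) the distributive lattice axioms, (C) the priority axioms, (D) the distributive
law of priorities over the lattice structure and (E) the parity axiom. -/
inductive PGAeq {M : ℕ} : {v w : Word} → Syn M v w → Syn M v w → Prop where
  -- equivalence
  | refl (f : Syn M v w) : PGAeq f f
  | symm_rel {f g : Syn M v w} : PGAeq f g → PGAeq g f
  | trans {f g h : Syn M v w} : PGAeq f g → PGAeq g h → PGAeq f h
  -- congruence with respect to the two compositions
  | comp_congr {f f' : Syn M u v} {g g' : Syn M v w} :
      PGAeq f f' → PGAeq g g' → PGAeq (f ⨟ g) (f' ⨟ g')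
  | tensor_congr {f f' : Syn M u1 w1} {g g' : Syn M u2 w2} :
      PGAeq f f' → PGAeq g g' → PGAeq (f ⊠ g) (f' ⊠ g')
  -- laws of (strict) symmetric monoidal categories
  | comp_assoc (f : Syn M u v) (g : Syn M v w) (h : Syn M w x) :
      PGAeq ((f ⨟ g) ⨟ h) (f ⨟ (g ⨟ h))
  | id_comp (f : Syn M v w) : PGAeq (Syn.id v ⨟ f) f
  | comp_id (f : Syn M v w) : PGAeq (f ⨟ Syn.id w) f
  | tensor_id (v w : Word) : PGAeq (Syn.id v ⊠ Syn.id w) (Syn.id (v ++ w))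
  | interchange (f1 : Syn M u1 v1) (g1 : Syn M v1 w1) (f2 : Syn M u2 v2) (g2 : Syn M v2 w2) :
      PGAeq ((f1 ⨟ g1) ⊠ (f2 ⨟ g2)) ((f1 ⊠ f2) ⨟ (g1 ⊠ g2))
  | tensor_assoc (f : Syn M u1 w1) (g : Syn M u2 w2) (h : Syn M u3 w3) :
      PGAeq (Syn.castHom (List.append_assoc u1 u2 u3) (List.append_assoc w1 w2 w3)
              ((f ⊠ g) ⊠ h))
            (f ⊠ (g ⊠ h))
  | tensor_nil (f : Syn M u w) :
      PGAeq (Syn.castHom (List.append_nil u) (List.append_nil w) (f ⊠ Syn.id [])) f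
  | swap_nat (f : Syn M u1 w1) (g : Syn M u2 w2) :
      PGAeq ((f ⊠ g) ⨟ Syn.symm w1 w2) (Syn.symm u1 u2 ⨟ (g ⊠ f))
  | swap_inv (v w : Word) : PGAeq (Syn.symm v w ⨟ Syn.symm w v) (Syn.id (v ++ w))
  | hexagon (u v w : Word) :
      PGAeq (Syn.symm u (v ++ w))
        (Syn.castHom (List.append_assoc u v w) (List.append_assoc v w u).symm
          ((Syn.symm u v ⊠ Syn.id w)
            ⨟ Syn.castHom (List.append_assoc v u w).symm rfl (Syn.id v ⊠ Syn.symm u w)))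
  -- (A) compact closure: yanking, and removal of a closed loop
  | yank_r : PGAeq (v := [Obj.r]) (w := [Obj.r]) ((Syn.cup ⊠ Syn.id [Obj.r]) ⨟ (Syn.id [Obj.r] ⊠ Syn.cap))
      (Syn.id [Obj.r])
  | yank_l : PGAeq (v := [Obj.l]) (w := [Obj.l]) ((Syn.id [Obj.l] ⊠ Syn.cup) ⨟ (Syn.cap ⊠ Syn.id [Obj.l]))
      (Syn.id [Obj.l])
  | loop : PGAeq (v := ([] : Word)) (w := ([] : Word)) (Syn.cup ⨟ Syn.symm [Obj.r] [Obj.l] ⨟ Syn.cap) (Syn.id [])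
  -- (B) distributive lattice axioms
  | B1 : PGAeq (v := [Obj.r, Obj.r, Obj.r]) (w := [Obj.r]) ((Syn.merge ⊠ Syn.id [Obj.r]) ⨟ Syn.merge)
      ((Syn.id [Obj.r] ⊠ Syn.merge) ⨟ Syn.merge)
  | B2 : PGAeq (v := [Obj.r, Obj.r]) (w := [Obj.r]) (Syn.symm [Obj.r] [Obj.r] ⨟ Syn.merge) Syn.merge
  | B3r : PGAeq (v := [Obj.r]) (w := [Obj.r]) ((Syn.id [Obj.r] ⊠ Syn.start) ⨟ Syn.merge) (Syn.id [Obj.r])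
  | B3l : PGAeq (v := [Obj.r]) (w := [Obj.r]) ((Syn.start ⊠ Syn.id [Obj.r]) ⨟ Syn.merge) (Syn.id [Obj.r])
  | B4 : PGAeq (v := [Obj.r]) (w := [Obj.r, Obj.r, Obj.r]) (Syn.player0 ⨟ (Syn.player0 ⊠ Syn.id [Obj.r]))
      (Syn.player0 ⨟ (Syn.id [Obj.r] ⊠ Syn.player0))
  | B5 : PGAeq (v := [Obj.r]) (w := [Obj.r, Obj.r]) (Syn.player0 ⨟ Syn.symm [Obj.r] [Obj.r]) Syn.player0
  | B6r : PGAeq (v := [Obj.r]) (w := [Obj.r]) (Syn.player0 ⨟ (Syn.lose0 ⊠ Syn.id [Obj.r])) (Syn.id [Obj.r])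
  | B6l : PGAeq (v := [Obj.r]) (w := [Obj.r]) (Syn.player0 ⨟ (Syn.id [Obj.r] ⊠ Syn.lose0)) (Syn.id [Obj.r])
  | B7 : PGAeq (v := [Obj.r]) (w := [Obj.r, Obj.r, Obj.r]) (Syn.player1 ⨟ (Syn.player1 ⊠ Syn.id [Obj.r]))
      (Syn.player1 ⨟ (Syn.id [Obj.r] ⊠ Syn.player1))
  | B8 : PGAeq (v := [Obj.r]) (w := [Obj.r, Obj.r]) (Syn.player1 ⨟ Syn.symm [Obj.r] [Obj.r]) Syn.player1
  | B9r : PGAeq (v := [Obj.r]) (w := [Obj.r]) (Syn.player1 ⨟ (Syn.lose1 ⊠ Syn.id [Obj.r])) (Syn.id [Obj.r])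
  | B9l : PGAeq (v := [Obj.r]) (w := [Obj.r]) (Syn.player1 ⨟ (Syn.id [Obj.r] ⊠ Syn.lose1)) (Syn.id [Obj.r])
  | B10 : PGAeq (v := [Obj.r, Obj.r]) (w := [Obj.r, Obj.r]) (Syn.merge ⨟ Syn.player0)
      ((Syn.player0 ⊠ Syn.player0)
        ⨟ ((Syn.id [Obj.r] ⊠ Syn.symm [Obj.r] [Obj.r]) ⊠ Syn.id [Obj.r] :
          Syn M [Obj.r, Obj.r, Obj.r, Obj.r] [Obj.r, Obj.r, Obj.r, Obj.r])
        ⨟ (Syn.merge ⊠ Syn.merge))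
  | B11 : PGAeq (v := [Obj.r, Obj.r]) (w := ([] : Word)) (Syn.merge ⨟ Syn.lose0) (Syn.lose0 ⊠ Syn.lose0)
  | B12 : PGAeq (v := ([] : Word)) (w := [Obj.r, Obj.r]) (Syn.start ⨟ Syn.player0) (Syn.start ⊠ Syn.start)
  | B13 : PGAeq (v := ([] : Word)) (w := [Obj.r, Obj.r]) (Syn.start ⨟ Syn.player1) (Syn.start ⊠ Syn.start)
  | B14 : PGAeq (v := ([] : Word)) (w := ([] : Word)) (Syn.start ⨟ Syn.lose0) (Syn.id [])
  | B15 : PGAeq (v := ([] : Word)) (w := ([] : Word)) (Syn.start ⨟ Syn.lose1) (Syn.id [])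
  | B16 : PGAeq (v := [Obj.r]) (w := [Obj.r]) (Syn.player0 ⨟ Syn.merge) (Syn.id [Obj.r])
  | B17 : PGAeq (v := [Obj.r]) (w := [Obj.r]) (Syn.player1 ⨟ Syn.merge) (Syn.id [Obj.r])
  | B18 : PGAeq (v := [Obj.r, Obj.r]) (w := [Obj.r, Obj.r]) (Syn.merge ⨟ Syn.player1)
      ((Syn.player1 ⊠ Syn.player1)
        ⨟ ((Syn.id [Obj.r] ⊠ Syn.symm [Obj.r] [Obj.r]) ⊠ Syn.id [Obj.r] :
          Syn M [Obj.r, Obj.r, Obj.r, Obj.r] [Obj.r, Obj.r, Obj.r, Obj.r])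
        ⨟ (Syn.merge ⊠ Syn.merge))
  | B19 : PGAeq (v := [Obj.r, Obj.r]) (w := ([] : Word)) (Syn.merge ⨟ Syn.lose1) (Syn.lose1 ⊠ Syn.lose1)
  | B20 : PGAeq (v := [Obj.r]) (w := [Obj.r, Obj.r, Obj.r]) (Syn.player0 ⨟ (Syn.player1 ⊠ Syn.id [Obj.r]))
      (Syn.player1 ⨟ (Syn.player0 ⊠ Syn.player0)
        ⨟ ((Syn.id [Obj.r] ⊠ Syn.symm [Obj.r] [Obj.r]) ⊠ Syn.id [Obj.r] :
          Syn M [Obj.r, Obj.r, Obj.r, Obj.r] [Obj.r, Obj.r, Obj.r, Obj.r])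
        ⨟ ((Syn.id [Obj.r] ⊠ Syn.id [Obj.r]) ⊠ Syn.merge :
          Syn M [Obj.r, Obj.r, Obj.r, Obj.r] [Obj.r, Obj.r, Obj.r]))
  | B21 : PGAeq (v := [Obj.r]) (w := [Obj.r]) (Syn.player0 ⨟ (Syn.lose1 ⊠ Syn.id [Obj.r])) (Syn.lose1 ⨟ Syn.start)
  | B22 : PGAeq (v := [Obj.r]) (w := [Obj.r, Obj.r, Obj.r]) (Syn.player1 ⨟ (Syn.player0 ⊠ Syn.id [Obj.r]))
      (Syn.player0 ⨟ (Syn.player1 ⊠ Syn.player1)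
        ⨟ ((Syn.id [Obj.r] ⊠ Syn.symm [Obj.r] [Obj.r]) ⊠ Syn.id [Obj.r] :
          Syn M [Obj.r, Obj.r, Obj.r, Obj.r] [Obj.r, Obj.r, Obj.r, Obj.r])
        ⨟ ((Syn.id [Obj.r] ⊠ Syn.id [Obj.r]) ⊠ Syn.merge :
          Syn M [Obj.r, Obj.r, Obj.r, Obj.r] [Obj.r, Obj.r, Obj.r]))
  | B23 : PGAeq (v := [Obj.r]) (w := [Obj.r]) (Syn.player1 ⨟ (Syn.lose0 ⊠ Syn.id [Obj.r])) (Syn.lose0 ⨟ Syn.start)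
  -- (C) priority axioms
  | C1 (p : Fin (M + 1)) : PGAeq (v := [Obj.r, Obj.r]) (w := [Obj.r]) ((Syn.priority p ⊠ Syn.priority p) ⨟ Syn.merge)
      (Syn.merge ⨟ Syn.priority p)
  | C2 (p : Fin (M + 1)) : PGAeq (v := ([] : Word)) (w := [Obj.r]) (Syn.start ⨟ Syn.priority p) Syn.start
  | C3 (p q : Fin (M + 1)) : PGAeq (v := [Obj.r]) (w := [Obj.r]) (Syn.priority p ⨟ Syn.priority q)
      (Syn.priority (max p q))
  | C4 : PGAeq (Syn.priority 0) (Syn.id [Obj.r])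
  -- (D) distributive law of priorities over the lattice structure
  | D1 (p : Fin (M + 1)) : PGAeq (v := [Obj.r]) (w := [Obj.r, Obj.r]) (Syn.priority p ⨟ Syn.player0)
      (Syn.player0 ⨟ (Syn.priority p ⊠ Syn.priority p))
  | D2 (p : Fin (M + 1)) : PGAeq (v := [Obj.r]) (w := ([] : Word)) (Syn.priority p ⨟ Syn.lose0) Syn.lose0
  | D3 (p : Fin (M + 1)) : PGAeq (v := [Obj.r]) (w := [Obj.r, Obj.r]) (Syn.priority p ⨟ Syn.player1)
      (Syn.player1 ⨟ (Syn.priority p ⊠ Syn.priority p))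
  | D4 (p : Fin (M + 1)) : PGAeq (v := [Obj.r]) (w := ([] : Word)) (Syn.priority p ⨟ Syn.lose1) Syn.lose1
  -- (E) the parity axiom
  | parity_even (p : Fin (M + 1)) (h : Even p.val) :
      PGAeq (parityLHS M p) Syn.player0
  | parity_odd (p : Fin (M + 1)) (h : Odd p.val) :
      PGAeq (v := [Obj.r]) (w := [Obj.r, Obj.r]) (parityLHS M p) (Syn.start ⊠ Syn.id [Obj.r])
/-! ## Acyclic diagrams, layers and normal forms -/

/-- A diagram is *acyclic* if it is composed only of the generators
`player0, lose0, player1, lose1, merge, start, priority p` (together with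
identities and wire crossings on `▶`-wires), i.e. it contains no `cup` or `cap`. -/
inductive Acyclic {M : ℕ} : {v w : Word} → Syn M v w → Prop where
  | id (k : ℕ) : Acyclic (Syn.id (rword k))
  | symm (k j : ℕ) : Acyclic (Syn.symm (rword k) (rword j))
  | player0 : Acyclic Syn.player0
  | lose0 : Acyclic Syn.lose0
  | player1 : Acyclic Syn.player1
  | lose1 : Acyclic Syn.lose1
  | merge : Acyclic Syn.merge
  | start : Acyclic Syn.start
  | priority (p : Fin (M + 1)) : Acyclic (Syn.priority p)
  | comp {u v w : Word} {f : Syn M u v} {g : Syn M v w} :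
      Acyclic f → Acyclic g → Acyclic (f ⨟ g)
  | tensor {u1 w1 u2 w2 : Word} {f : Syn M u1 w1} {g : Syn M u2 w2} :
      Acyclic f → Acyclic g → Acyclic (f ⊠ g)

/-- A *layer* of generators from `S`: a diagram built only from generators in `S`
together with identities and wire crossings. -/
inductive Layer {M : ℕ} (S : {v w : Word} → Syn M v w → Prop) :
    {v w : Word} → Syn M v w → Prop where
  | base {v w : Word} {f : Syn M v w} : S f → Layer S f
  | id (k : ℕ) : Layer S (Syn.id (rword k))
  | symm (k j : ℕ) : Layer S (Syn.symm (rword k) (rword j))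
  | comp {u v w : Word} {f : Syn M u v} {g : Syn M v w} :
      Layer S f → Layer S g → Layer S (f ⨟ g)
  | tensor {u1 w1 u2 w2 : Word} {f : Syn M u1 w1} {g : Syn M u2 w2} :
      Layer S f → Layer S g → Layer S (f ⊠ g)

/-- The generators `player0`, `lose0`. -/
inductive Gen0 {M : ℕ} : {v w : Word} → Syn M v w → Prop where
  | player0 : Gen0 Syn.player0
  | lose0 : Gen0 Syn.lose0

/-- The generators `player1`, `lose1`. -/
inductive Gen1 {M : ℕ} : {v w : Word} → Syn M v w → Prop where
  | player1 : Gen1 Syn.player1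
  | lose1 : Gen1 Syn.lose1

/-- The generators `priority p`. -/
inductive GenP {M : ℕ} : {v w : Word} → Syn M v w → Prop where
  | priority (p : Fin (M + 1)) : GenP (Syn.priority p)

/-- The generators `merge`, `start`. -/
inductive GenM {M : ℕ} : {v w : Word} → Syn M v w → Prop where
  | merge : GenM Syn.merge
  | start : GenM Syn.start

/-- A diagram is in *normal form* when it factors into a layer of `player0/lose0`,
followed by a layer of `player1/lose1`, followed by a layer of priorities, followed
by a layer of `merge/start`. -/
def InNormalForm {M : ℕ} {v w : Word} (d : Syn M v w) : Prop :=
  ∃ (a b c : Word) (f1 : Syn M v a) (f2 : Syn M a b) (f3 : Syn M b c) (f4 : Syn M c w),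
    Layer Gen0 f1 ∧ Layer Gen1 f2 ∧ Layer GenP f3 ∧ Layer GenM f4 ∧
    d = f1 ⨟ (f2 ⨟ (f3 ⨟ f4))

theorem rword_append (a b : ℕ) : rword a ++ rword b = rword (a + b) :=
  (List.replicate_add a b Obj.r).symm

theorem mergeN_dom (k : ℕ) :
    [Obj.r] ++ ((rword k ++ [Obj.r]) ++ rword k) = rword ((k + 1) + (k + 1)) := by
  show rword 1 ++ ((rword k ++ rword 1) ++ rword k) = rword ((k + 1) + (k + 1))
  simp only [rword_append]
  exact congrArg rword (by omega)

theorem mergeN_mid (k : ℕ) :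
    [Obj.r, Obj.r] ++ rword (k + k) = [Obj.r] ++ (([Obj.r] ++ rword k) ++ rword k) := by
  show rword 2 ++ rword (k + k) = rword 1 ++ ((rword 1 ++ rword k) ++ rword k)
  simp only [rword_append]
  exact congrArg rword (by omega)

/-- The `k`-wire generalisation `merge_k : ▶^{2k} → ▶^k` of `merge`, merging the
`i`-th wire of the first group with the `i`-th wire of the second group. -/
def mergeN (M : ℕ) : (k : ℕ) → Syn M (rword (k + k)) (rword k)
  | 0 => Syn.id []
  | k + 1 =>
      Syn.castHom (mergeN_dom k) rfl
        ((Syn.id [Obj.r] ⊠ (Syn.symm (rword k) [Obj.r] ⊠ Syn.id (rword k)))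
          ⨟ Syn.castHom (mergeN_mid k) rfl (Syn.merge ⊠ mergeN M k))

/-- The `k`-wire generalisation `start_k : ε → ▶^k` of `start`. -/
def startN (M : ℕ) : (k : ℕ) → Syn M [] (rword k)
  | 0 => Syn.id []
  | k + 1 => Syn.start ⊠ startN M k

/-!
Diagrams modulo the axioms of PGA form a symmetric monoidal category. In it `(merge, start)` makes
`▶` a commutative monoid object, and hence every `▶^k` a commutative monoid object wire by wire,
with multiplication `merge_k` and unit `start_k`. The axioms distributing `player0`, `lose0`,
`player1`, `lose1` and `priority p` over `merge` and `start` say that these generators are monoid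
homomorphisms; commutativity makes `merge` one as well. Since monoid homomorphisms are closed under
composition and tensor, every acyclic diagram is one, and the two equations say exactly that.
-/

open CategoryTheory MonoidalCategory MonObj

section DerivableEquality

variable {M : ℕ} {u u' w w' : Word}

theorem PGAeq.castHom_congr {f g : Syn M u w} (hu : u = u') (hw : w = w') (h : PGAeq f g) :
    PGAeq (f.castHom hu hw) (g.castHom hu hw) := by
  subst hu hw
  exact h

theorem PGAeq.of_id_nil_tensor {f g : Syn M u w}
    (h : PGAeq (Syn.id [] ⊠ f) (Syn.id [] ⊠ g)) : PGAeq f g := by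
  have tensor_eq_conj (e : Syn M u w) : PGAeq (e ⊠ Syn.id [])
      (Syn.symm u [] ⨟ (Syn.id [] ⊠ e) ⨟ Syn.symm [] w) :=
    .trans (.symm_rel (.comp_id _)) <| .trans (.comp_congr (.refl _) (.symm_rel (.swap_inv _ _))) <|
      .trans (.symm_rel (.comp_assoc _ _ _)) (.comp_congr (.swap_nat _ _) (.refl _))
  have tensor_id_nil : PGAeq (f ⊠ Syn.id []) (g ⊠ Syn.id []) :=
    (tensor_eq_conj f).trans <|
      (PGAeq.comp_congr (.comp_congr (.refl _) h) (.refl _)).trans (tensor_eq_conj g).symm_rel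
  exact (PGAeq.tensor_nil f).symm_rel.trans <|
    (tensor_id_nil.castHom_congr _ _).trans (PGAeq.tensor_nil g)

-- Only the right unit law is an axiom, but `Syn.id [] ⊠ _` is idempotent and, by the symmetry of
-- wire crossings, injective.
theorem PGAeq.id_nil_tensor (f : Syn M u w) : PGAeq (Syn.id [] ⊠ f) f :=
  .of_id_nil_tensor <|
    .trans (.symm_rel (.tensor_assoc (Syn.id []) (Syn.id []) f))
      (.tensor_congr (.tensor_id [] []) (.refl f))

end DerivableEquality

/-- The prop presented by Parity Game Algebra: its objects are words over `{▶, ◀}`, its morphisms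
diagrams up to derivable equality. The structure wrapper keeps the category structure off `List`. -/
@[ext]
structure PGA (M : ℕ) : Type where
  word : Word

/-- Derivable equality as a setoid. -/
def pgaSetoid (M : ℕ) (u v : Word) : Setoid (Syn M u v) where
  r := PGAeq
  iseqv := ⟨PGAeq.refl, PGAeq.symm_rel, PGAeq.trans⟩

instance PGA.category (M : ℕ) : Category (PGA M) where
  Hom X Y := Quotient (pgaSetoid M X.word Y.word)
  id X := Quotient.mk _ (Syn.id X.word)
  comp := Quotient.map₂ Syn.comp fun _ _ hf _ _ hg => PGAeq.comp_congr hf hg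
  id_comp := Quotient.ind fun _ => Quotient.sound (PGAeq.id_comp _)
  comp_id := Quotient.ind fun _ => Quotient.sound (PGAeq.comp_id _)
  assoc := by
    rintro _ _ _ _ ⟨f⟩ ⟨g⟩ ⟨h⟩
    exact Quotient.sound (PGAeq.comp_assoc f g h)

instance PGA.monoidalCategoryStruct (M : ℕ) : MonoidalCategoryStruct (PGA M) :=
  let tensor {X₁ Y₁ X₂ Y₂ : PGA M} (f : X₁ ⟶ Y₁) (g : X₂ ⟶ Y₂) :
      (⟨X₁.word ++ X₂.word⟩ : PGA M) ⟶ ⟨Y₁.word ++ Y₂.word⟩ :=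
    Quotient.map₂ (sa := pgaSetoid M X₁.word Y₁.word) (sb := pgaSetoid M X₂.word Y₂.word)
      (sc := pgaSetoid M _ _) Syn.tensor (fun _ _ hf _ _ hg => PGAeq.tensor_congr hf hg) f g
  { tensorObj := fun X Y => ⟨X.word ++ Y.word⟩
    tensorHom := tensor
    whiskerLeft := fun X _ _ f => tensor (𝟙 X) f
    whiskerRight := fun f Y => tensor f (𝟙 Y)
    tensorUnit := ⟨[]⟩
    associator := fun _ _ _ => eqToIso (PGA.ext (List.append_assoc _ _ _))
    leftUnitor := fun _ => eqToIso rfl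
    rightUnitor := fun _ => eqToIso (PGA.ext (List.append_nil _)) }

/-- The class of a diagram modulo derivable equality. -/
def Syn.toHom {M : ℕ} {v w : Word} (f : Syn M v w) : (⟨v⟩ : PGA M) ⟶ ⟨w⟩ :=
  Quotient.mk (pgaSetoid M v w) f

section Quotient

variable {M : ℕ} {u u' v w w' u₁ w₁ u₂ w₂ : Word}

theorem Syn.toHom_eq_iff {f g : Syn M v w} : f.toHom = g.toHom ↔ PGAeq f g :=
  ⟨Quotient.exact, fun h => Quotient.sound h⟩

theorem PGAeq.toHom_eq {f g : Syn M v w} (h : PGAeq f g) : f.toHom = g.toHom :=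
  Syn.toHom_eq_iff.2 h

theorem Syn.toHom_surjective : Function.Surjective (Syn.toHom : Syn M v w → _) :=
  Quotient.mk_surjective

theorem Syn.toHom_comp (f : Syn M u v) (g : Syn M v w) : (f ⨟ g).toHom = f.toHom ≫ g.toHom := rfl

theorem Syn.toHom_tensor (f : Syn M u₁ w₁) (g : Syn M u₂ w₂) :
    (f ⊠ g).toHom = f.toHom ⊗ₘ g.toHom := rfl

theorem Syn.toHom_castHom (hu : u = u') (hw : w = w') (f : Syn M u w) :
    (f.castHom hu hw).toHom =
      eqToHom (congrArg PGA.mk hu.symm) ≫ f.toHom ≫ eqToHom (congrArg PGA.mk hw) := by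
  subst hu hw
  exact ((Category.id_comp _).trans (Category.comp_id _)).symm

theorem Syn.toHom_castHom_rfl (hu : u = u') (f : Syn M u w) :
    (f.castHom hu rfl).toHom = eqToHom (congrArg PGA.mk hu.symm) ≫ f.toHom := by
  subst hu
  exact (Category.id_comp _).symm

end Quotient

namespace PGA

variable {M : ℕ}

theorem associator_eq (X Y Z : PGA M) :
    α_ X Y Z = eqToIso (PGA.ext (List.append_assoc X.word Y.word Z.word)) := rfl

theorem leftUnitor_eq (X : PGA M) : λ_ X = eqToIso rfl := rfl

theorem rightUnitor_eq (X : PGA M) : ρ_ X = eqToIso (PGA.ext (List.append_nil X.word)) := rfl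

theorem eqToHom_tensorHom_eqToHom {X X' Y Y' : PGA M} (hX : X = X') (hY : Y = Y') :
    eqToHom hX ⊗ₘ eqToHom hY = eqToHom (congrArg₂ tensorObj hX hY) := by
  subst hX hY
  exact (PGAeq.tensor_id X.word Y.word).toHom_eq

theorem tensorHom_comp_tensorHom {X₁ Y₁ Z₁ X₂ Y₂ Z₂ : PGA M} (f₁ : X₁ ⟶ Y₁) (f₂ : X₂ ⟶ Y₂)
    (g₁ : Y₁ ⟶ Z₁) (g₂ : Y₂ ⟶ Z₂) : (f₁ ⊗ₘ f₂) ≫ (g₁ ⊗ₘ g₂) = (f₁ ≫ g₁) ⊗ₘ (f₂ ≫ g₂) := by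
  obtain ⟨f₁, rfl⟩ := Syn.toHom_surjective f₁
  obtain ⟨f₂, rfl⟩ := Syn.toHom_surjective f₂
  obtain ⟨g₁, rfl⟩ := Syn.toHom_surjective g₁
  obtain ⟨g₂, rfl⟩ := Syn.toHom_surjective g₂
  exact (PGAeq.interchange f₁ g₁ f₂ g₂).symm_rel.toHom_eq

theorem associator_naturality {X₁ X₂ X₃ Y₁ Y₂ Y₃ : PGA M} (f₁ : X₁ ⟶ Y₁) (f₂ : X₂ ⟶ Y₂)
    (f₃ : X₃ ⟶ Y₃) :
    ((f₁ ⊗ₘ f₂) ⊗ₘ f₃) ≫ (α_ Y₁ Y₂ Y₃).hom = (α_ X₁ X₂ X₃).hom ≫ (f₁ ⊗ₘ f₂ ⊗ₘ f₃) := by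
  obtain ⟨f₁, rfl⟩ := Syn.toHom_surjective f₁
  obtain ⟨f₂, rfl⟩ := Syn.toHom_surjective f₂
  obtain ⟨f₃, rfl⟩ := Syn.toHom_surjective f₃
  have h := (PGAeq.tensor_assoc f₁ f₂ f₃).toHom_eq
  rw [Syn.toHom_castHom] at h
  exact (Iso.inv_comp_eq (α_ X₁ X₂ X₃)).1 h

theorem leftUnitor_naturality {X Y : PGA M} (f : X ⟶ Y) :
    (𝟙 (𝟙_ (PGA M)) ⊗ₘ f) ≫ (λ_ Y).hom = (λ_ X).hom ≫ f := by
  obtain ⟨f, rfl⟩ := Syn.toHom_surjective f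
  calc _ = (Syn.id [] ⊠ f).toHom := Category.comp_id _
    _ = f.toHom := (PGAeq.id_nil_tensor f).toHom_eq
    _ = _ := (Category.id_comp _).symm

theorem rightUnitor_naturality {X Y : PGA M} (f : X ⟶ Y) :
    (f ⊗ₘ 𝟙 (𝟙_ (PGA M))) ≫ (ρ_ Y).hom = (ρ_ X).hom ≫ f := by
  obtain ⟨f, rfl⟩ := Syn.toHom_surjective f
  have h := (PGAeq.tensor_nil f).toHom_eq
  rw [Syn.toHom_castHom] at h
  exact (Iso.inv_comp_eq (ρ_ X)).1 h

instance monoidalCategory (M : ℕ) : MonoidalCategory (PGA M) :=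
  .ofTensorHom
    (id_tensorHom_id := fun X Y => eqToHom_tensorHom_eqToHom (Eq.refl X) (Eq.refl Y))
    (id_tensorHom := fun _ _ _ _ => rfl)
    (tensorHom_id := fun _ _ => rfl)
    (tensorHom_comp_tensorHom := tensorHom_comp_tensorHom)
    (associator_naturality := associator_naturality)
    (leftUnitor_naturality := leftUnitor_naturality)
    (rightUnitor_naturality := rightUnitor_naturality)
    (pentagon := fun W X Y Z => by
      simp [← eqToHom_refl, eqToHom_tensorHom_eqToHom, associator_eq])
    (triangle := fun X Y => by
      simp only [associator_eq, leftUnitor_eq, rightUnitor_eq, eqToIso.hom, ← eqToHom_refl,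
        eqToHom_tensorHom_eqToHom, eqToHom_trans])

/-- The crossing of wires, as an isomorphism. -/
def crossing (X Y : PGA M) : X ⊗ Y ≅ Y ⊗ X where
  hom := (Syn.symm X.word Y.word).toHom
  inv := (Syn.symm Y.word X.word).toHom
  hom_inv_id := (PGAeq.swap_inv X.word Y.word).toHom_eq
  inv_hom_id := (PGAeq.swap_inv Y.word X.word).toHom_eq

theorem crossing_inv (X Y : PGA M) : (crossing X Y).inv = (crossing Y X).hom := rfl

theorem crossing_hexagon (X Y Z : PGA M) :
    α_ X Y Z ≪≫ crossing X (Y ⊗ Z) ≪≫ α_ Y Z X =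
      whiskerRightIso (crossing X Y) Z ≪≫ α_ Y X Z ≪≫ whiskerLeftIso Y (crossing X Z) := by
  have h := (PGAeq.hexagon (M := M) X.word Y.word Z.word).toHom_eq
  rw [Syn.toHom_castHom, Syn.toHom_comp, Syn.toHom_castHom] at h
  have crossing_tensor : (crossing X (Y ⊗ Z)).hom = (α_ X Y Z).inv ≫
      ((crossing X Y).hom ▷ Z ≫ (α_ Y X Z).hom ≫ Y ◁ (crossing X Z).hom ≫ 𝟙 _) ≫
      (α_ Y Z X).inv := h
  ext
  simp [crossing_tensor]

instance : BraidedCategory (PGA M) where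
  braiding := crossing
  braiding_naturality_right X _ _ f := by
    obtain ⟨f, rfl⟩ := Syn.toHom_surjective f
    exact (PGAeq.swap_nat (Syn.id X.word) f).toHom_eq
  braiding_naturality_left f Z := by
    obtain ⟨f, rfl⟩ := Syn.toHom_surjective f
    exact (PGAeq.swap_nat f (Syn.id Z.word)).toHom_eq
  hexagon_forward X Y Z := congrArg Iso.hom (crossing_hexagon X Y Z)
  -- Crossings are involutive, so the second hexagon for `X, Y, Z` inverts the first for `Z, X, Y`.
  hexagon_reverse X Y Z := by
    simpa [crossing_inv] using congrArg Iso.inv (crossing_hexagon Z X Y)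

instance : SymmetricCategory (PGA M) where
  symmetry X Y := (crossing X Y).hom_inv_id

theorem tensorμ_eq (X Y Z W : PGA M) :
    tensorμ X Y Z W =
      eqToHom (PGA.ext (by simp [tensorObj])) ≫
        (𝟙 X ⊗ₘ (β_ Y Z).hom ⊗ₘ 𝟙 W) ≫
      eqToHom (PGA.ext (by simp [tensorObj])) := by
  simp [tensorμ, associator_eq, whiskerLeft_eqToHom]

end PGA

section MonoidalCategory

variable {C : Type*} [Category* C] [MonoidalCategory C]

theorem tensorHom_eqToHom_comp {X Y Z Z' W : C} (h : Z = Z') (f : X ⟶ Y) (g : Z' ⟶ W) :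
    f ⊗ₘ (eqToHom h ≫ g) = eqToHom (congrArg (X ⊗ ·) h) ≫ (f ⊗ₘ g) := by
  subst h
  simp

theorem monObj_eq_of_isMonHom_id {X : C} (A B : MonObj X) (h : @IsMonHom _ _ _ X X A B (𝟙 X)) :
    A = B := by
  refine MonObj.ext A B ?_
  simpa using h.mul_hom

theorem isMonHom_one (X : C) [MonObj X] : IsMonHom η[X] where
  one_hom := Category.id_comp _
  mul_hom := by simp [tensorHom_def']

theorem isMonHom_mul [SymmetricCategory C] (X : C) [MonObj X] [IsCommMonObj X] :
    IsMonHom μ[X] where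
  one_hom := by rw [tensorObj.one_def]; simp [tensorHom_def']
  mul_hom := by rw [tensorObj.mul_def]; simp

end MonoidalCategory

section Wire

/-- The object `▶`. A definition rather than a bare word, so that its monoid structure does not
compete with the one on words. -/
def wire (M : ℕ) : PGA M := ⟨[Obj.r]⟩

variable {M : ℕ}

instance wire.monObj : MonObj (wire M) where
  one := (Syn.start : Syn M [] [Obj.r]).toHom
  mul := (Syn.merge : Syn M [Obj.r, Obj.r] [Obj.r]).toHom
  one_mul := PGAeq.B3l.toHom_eq
  mul_one := PGAeq.B3r.toHom_eq
  mul_assoc := PGAeq.B1.toHom_eq.trans (Category.id_comp _).symm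

instance : IsCommMonObj (wire M) where
  mul_comm := PGAeq.B2.toHom_eq

theorem tensorμ_wire :
    tensorμ (wire M) (wire M) (wire M) (wire M) =
      ((Syn.id [Obj.r] ⊠ Syn.symm [Obj.r] [Obj.r]) ⊠ Syn.id [Obj.r]).toHom := by
  have assoc := (PGAeq.tensor_assoc (M := M) (Syn.id [Obj.r]) (Syn.symm [Obj.r] [Obj.r])
    (Syn.id [Obj.r])).toHom_eq
  exact (PGA.tensorμ_eq ..).trans <| (Category.id_comp _).trans <|
    (Category.comp_id _).trans assoc.symm

end Wire

section Words

/-- A word is rightward if all its letters are `▶`. -/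
class Rightward (v : Word) : Prop where
  eq_r : ∀ o ∈ v, o = Obj.r

variable {M : ℕ} {v w : Word}

instance : Rightward [] := ⟨by simp⟩

instance [h : Rightward v] : Rightward (Obj.r :: v) := ⟨by simpa using h.eq_r⟩

instance (k : ℕ) : Rightward (rword k) := ⟨fun _ => List.eq_of_mem_replicate⟩

instance [hv : Rightward v] [hw : Rightward w] : Rightward (v ++ w) :=
  ⟨List.forall_mem_append.2 ⟨hv.eq_r, hw.eq_r⟩⟩

theorem Rightward.tail {o : Obj} (h : Rightward (o :: v)) : Rightward v :=
  ⟨(List.forall_mem_cons.1 h.eq_r).2⟩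

/-- The wirewise monoid structure on `▶^k`, a tensor power of `(merge, start)`. It is indexed by
rightward words instead of by `k`, so that it applies to `v ++ w` without a cast. -/
instance wordMonObj (M : ℕ) : (v : Word) → [Rightward v] → MonObj (⟨v⟩ : PGA M)
  | [], _ => inferInstanceAs (MonObj (𝟙_ (PGA M)))
  | .r :: v, h =>
    letI : MonObj (⟨v⟩ : PGA M) := @wordMonObj M v h.tail
    inferInstanceAs (MonObj (wire M ⊗ ⟨v⟩))
  | .l :: _, h => absurd (h.eq_r .l List.mem_cons_self) Obj.noConfusion

theorem wordMonObj_append (v w : Word) [hv : Rightward v] [Rightward w] :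
    wordMonObj M (v ++ w) = inferInstanceAs (MonObj ((⟨v⟩ : PGA M) ⊗ ⟨w⟩)) := by
  induction v generalizing hv with
  | nil => exact (monObj_eq_of_isMonHom_id _ _ (inferInstanceAs (IsMonHom (λ_ (⟨w⟩ : PGA M)).inv)))
  | cons o v ih =>
    cases hv.eq_r o List.mem_cons_self
    have := hv.tail
    have associator_inv : IsMonHom (α_ (wire M) (⟨v⟩ : PGA M) ⟨w⟩).inv := inferInstance
    refine .trans ?_ (monObj_eq_of_isMonHom_id _ _ associator_inv)
    let prependWire (A : MonObj (⟨v ++ w⟩ : PGA M)) : MonObj (wire M ⊗ ⟨v ++ w⟩) := inferInstance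
    exact congrArg prependWire ih

theorem wordMonObj_r : wordMonObj M [Obj.r] = wire.monObj :=
  monObj_eq_of_isMonHom_id _ _ (inferInstanceAs (IsMonHom (ρ_ (wire M)).hom))

theorem wordMonObj_r_r :
    wordMonObj M [Obj.r, Obj.r] = inferInstanceAs (MonObj (wire M ⊗ wire M)) := by
  have := wordMonObj_append (M := M) [Obj.r] [Obj.r]
  rw [wordMonObj_r] at this
  exact this

theorem isMonHom_merge : IsMonHom (Syn.merge : Syn M [Obj.r, Obj.r] [Obj.r]).toHom := by
  rw [wordMonObj_r, wordMonObj_r_r]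
  exact isMonHom_mul (wire M)

theorem isMonHom_start : IsMonHom (Syn.start : Syn M [] [Obj.r]).toHom := by
  rw [wordMonObj_r]
  exact isMonHom_one (wire M)

theorem isMonHom_priority (p : Fin (M + 1)) : IsMonHom (Syn.priority p).toHom := by
  suffices IsMonHom (M := wire M) (N := wire M) (Syn.priority p).toHom by rwa [wordMonObj_r]
  exact
    { one_hom := (PGAeq.C2 p).toHom_eq
      mul_hom := (PGAeq.C1 p).symm_rel.toHom_eq }

theorem isMonHom_of_codomain_nil {f : Syn M [Obj.r] []}
    (start_comp : PGAeq (Syn.start ⨟ f) (Syn.id []))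
    (merge_comp : PGAeq (Syn.merge ⨟ f) (f ⊠ f)) : IsMonHom f.toHom := by
  suffices IsMonHom (M := wire M) (N := 𝟙_ (PGA M)) f.toHom by rwa [wordMonObj_r]
  exact
    { one_hom := start_comp.toHom_eq
      mul_hom := merge_comp.toHom_eq.trans (Category.comp_id _).symm }

theorem isMonHom_of_codomain_r_r {f : Syn M [Obj.r] [Obj.r, Obj.r]}
    (start_comp : PGAeq (Syn.start ⨟ f) (Syn.start ⊠ Syn.start))
    (merge_comp : PGAeq (Syn.merge ⨟ f)
      ((f ⊠ f)
        ⨟ ((Syn.id [Obj.r] ⊠ Syn.symm [Obj.r] [Obj.r]) ⊠ Syn.id [Obj.r] :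
          Syn M [Obj.r, Obj.r, Obj.r, Obj.r] [Obj.r, Obj.r, Obj.r, Obj.r])
        ⨟ (Syn.merge ⊠ Syn.merge))) :
    IsMonHom f.toHom := by
  suffices IsMonHom (M := wire M) (N := wire M ⊗ wire M) f.toHom by
    rwa [wordMonObj_r, wordMonObj_r_r]
  exact
    { one_hom := start_comp.toHom_eq.trans (Category.id_comp _).symm
      mul_hom := by
        rw [tensorObj.mul_def, tensorμ_wire]
        exact (merge_comp.trans (.comp_assoc _ _ _)).toHom_eq }

theorem isMonHom_tensor {v₁ w₁ v₂ w₂ : Word} [Rightward v₁] [Rightward w₁] [Rightward v₂]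
    [Rightward w₂] (f : Syn M v₁ w₁) (g : Syn M v₂ w₂) [IsMonHom f.toHom] [IsMonHom g.toHom] :
    IsMonHom (f ⊠ g).toHom := by
  rw [wordMonObj_append, wordMonObj_append]
  exact inferInstanceAs (IsMonHom (f.toHom ⊗ₘ g.toHom))

theorem isMonHom_symm (v w : Word) [Rightward v] [Rightward w] :
    IsMonHom (Syn.symm v w : Syn M _ _).toHom := by
  rw [wordMonObj_append, wordMonObj_append]
  exact inferInstanceAs (IsMonHom (β_ (⟨v⟩ : PGA M) ⟨w⟩).hom)

theorem Acyclic.rightward {d : Syn M v w} (hd : Acyclic d) : Rightward v ∧ Rightward w := by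
  induction hd with
  | comp _ _ hf hg => exact ⟨hf.1, hg.2⟩
  | tensor _ _ hf hg =>
    obtain ⟨_, _⟩ := hf
    obtain ⟨_, _⟩ := hg
    exact ⟨inferInstance, inferInstance⟩
  | _ => exact ⟨inferInstance, inferInstance⟩

theorem Acyclic.isMonHom {d : Syn M v w} (hd : Acyclic d) :
    ∀ [Rightward v] [Rightward w], IsMonHom d.toHom := by
  induction hd with
  | id k => exact inferInstanceAs (IsMonHom (𝟙 (⟨rword k⟩ : PGA M)))
  | symm k j => exact isMonHom_symm (rword k) (rword j)
  | player0 => exact isMonHom_of_codomain_r_r .B12 .B10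
  | lose0 => exact isMonHom_of_codomain_nil .B14 .B11
  | player1 => exact isMonHom_of_codomain_r_r .B13 .B18
  | lose1 => exact isMonHom_of_codomain_nil .B15 .B19
  | merge => exact isMonHom_merge
  | start => exact isMonHom_start
  | priority p => exact isMonHom_priority p
  | @comp _ _ _ f g hf _ ihf ihg =>
    intros
    have := hf.rightward.2
    have := @ihf
    have := @ihg
    exact inferInstanceAs (IsMonHom (f.toHom ≫ g.toHom))
  | @tensor _ _ _ _ f g hf hg ihf ihg =>
    intros
    obtain ⟨_, _⟩ := hf.rightward
    obtain ⟨_, _⟩ := hg.rightward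
    have := @ihf
    have := @ihg
    exact isMonHom_tensor f g

end Words

theorem toHom_startN (M k : ℕ) : (startN M k).toHom = η[(⟨rword k⟩ : PGA M)] := by
  induction k with
  | zero => rfl
  | succ k ih =>
    change Syn.start.toHom ⊗ₘ (startN M k).toHom = _
    rw [ih]
    exact (Category.id_comp _).symm

theorem toHom_mergeN_succ (M k : ℕ) :
    (mergeN M (k + 1)).toHom =
      eqToHom (Y := wire M ⊗ (⟨rword k⟩ ⊗ wire M) ⊗ ⟨rword k⟩) (PGA.ext (mergeN_dom k).symm) ≫
        (𝟙 (wire M) ⊗ₘ (β_ ⟨rword k⟩ (wire M)).hom ⊗ₘ 𝟙 (⟨rword k⟩ : PGA M)) ≫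
        eqToHom (Y := (wire M ⊗ wire M) ⊗ ⟨rword (k + k)⟩) (PGA.ext (mergeN_mid k).symm) ≫
        (μ[wire M] ⊗ₘ (mergeN M k).toHom) :=
  (Syn.toHom_castHom_rfl (mergeN_dom k) _).trans <|
    congrArg (fun g => eqToHom _ ≫ Syn.toHom _ ≫ g) (Syn.toHom_castHom_rfl (mergeN_mid k) _)

theorem wordMonObj_mul_succ (M k : ℕ) :
    μ[(⟨rword (k + 1)⟩ : PGA M)] =
      tensorμ (wire M) ⟨rword k⟩ (wire M) ⟨rword k⟩ ≫ (μ[wire M] ⊗ₘ μ[(⟨rword k⟩ : PGA M)]) :=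
  rfl

theorem toHom_mergeN (M k : ℕ) :
    (mergeN M k).toHom =
      eqToHom (congrArg PGA.mk (rword_append k k).symm) ≫ μ[(⟨rword k⟩ : PGA M)] := by
  induction k with
  | zero => exact (Category.id_comp _).symm
  | succ k ih =>
    rw [toHom_mergeN_succ, ih, tensorHom_eqToHom_comp, wordMonObj_mul_succ, PGA.tensorμ_eq]
    simp only [Category.assoc, eqToHom_trans_assoc]
    exact (eqToHom_trans_assoc _ _ _).symm

/-- **Statement 6** (Copying and deleting of acyclic diagrams). For any acyclic
diagram `d : ▶^m → ▶^n`, `(d ⊗ d) ; merge_n = merge_m ; d` and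
`start_m ; d = start_n` are derivable in PGA. -/
theorem copy_delete_acyclic (M : ℕ) (hM : 2 ≤ M) (m n : ℕ)
    (d : Syn M (rword m) (rword n)) (hd : Acyclic d) :
    PGAeq
      (Syn.castHom (rword_append m m) rfl (d ⊠ d)
        ⨟ Syn.castHom (rword_append n n).symm rfl (mergeN M n))
      (mergeN M m ⨟ d) ∧
    PGAeq (startN M m ⨟ d) (startN M n) := by
  have d_isMonHom : IsMonHom d.toHom := hd.isMonHom
  refine ⟨Syn.toHom_eq_iff.1 ?_, Syn.toHom_eq_iff.1 ?_⟩
  · have mul_hom := IsMonHom.mul_hom d.toHom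
    simp [Syn.toHom_comp, Syn.toHom_castHom_rfl, toHom_mergeN, Syn.toHom_tensor, mul_hom]
  · rw [Syn.toHom_comp, toHom_startN, toHom_startN]
    exact IsMonHom.one_hom d.toHom

end PaperPG
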